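/- For every integer k ≥ 1 there exists a spanoid S on n = 5^k elements with rank(S) = 3^k and f-rank(S) ≤ (5/2)^k; consequently rank(S) ≥ n^c · f-rank(S), where c = log₅ 3 − log₅(5/2) ≥ 0.113. -/

import Mathlib

open scoped BigOperators

/-- A spanoid on ground set `X`: a set of inference rules `(A, i)`,
read as "`A` spans `i`". -/
abbrev SpanoidOn (X : Type) : Type := Set (Set X × X)

/-- The span of `T`: the smallest superset `T'` of `T` such that whenever `(A, i)` is a
rule with `A ⊆ T'`, also `i ∈ T'`. -/
def sSpan {X : Type} (S : SpanoidOn X) (T : Set X) : Set X :=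
  ⋂₀ {T' : Set X | T ⊆ T' ∧ ∀ p ∈ S, p.1 ⊆ T' → p.2 ∈ T'}

/-- The rank of a spanoid: the minimum size of a subset spanning the whole ground set. -/
noncomputable def sRank {X : Type} [Fintype X] (S : SpanoidOn X) : ℕ :=
  sInf {k : ℕ | ∃ T : Set X, T.ncard = k ∧ sSpan S T = Set.univ}

/-- A set is closed if it equals its own span. -/
def sClosed {X : Type} (S : SpanoidOn X) (B : Set X) : Prop := sSpan S B = B

/-- A set is open if its complement is closed. -/
def sOpen {X : Type} (S : SpanoidOn X) (B : Set X) : Prop := sClosed S Bᶜ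

/-- A code `C ⊆ K^X` is consistent with the spanoid `S` if for every rule `(A, i)` of `S`
there is a function `g` with `c i = g (c|_A)` for all codewords `c ∈ C`. -/
def sConsistent {X K : Type} (S : SpanoidOn X) (C : Set (X → K)) : Prop :=
  ∀ p ∈ S, ∃ g : (↥p.1 → K) → K, ∀ c ∈ C, c p.2 = g (fun a => c a.1)

/-- The functional rank of a spanoid: the supremum of `log |C| / log |Σ|` over all finite
alphabets `Σ` (of size at least 2) and all codes `C ⊆ Σ^X` consistent with `S`. -/
noncomputable def sFrank {X : Type} (S : SpanoidOn X) : ℝ :=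
  sSup {d : ℝ | ∃ m : ℕ, 2 ≤ m ∧ ∃ C : Set (X → Fin m),
    sConsistent S C ∧ d = Real.log (Nat.card C) / Real.log m}

/-- Feasibility for the entropy linear program of a spanoid. -/
def sEntFeasible {X : Type} (S : SpanoidOn X) (f : Set X → ℝ) : Prop :=
  f ∅ = 0 ∧ (∀ i : X, f {i} ≤ 1) ∧
  (∀ A B : Set X, f (A ∪ B) + f (A ∩ B) ≤ f A + f B) ∧
  (∀ A B : Set X, A ⊆ B → f A ≤ f B) ∧
  (∀ A : Set X, ∀ i ∈ sSpan S A, f (A ∪ {i}) = f A)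

/-- The optimum of the entropy linear program: maximize `f(X)` over feasible `f`. -/
noncomputable def sLPentropy {X : Type} (S : SpanoidOn X) : ℝ :=
  sSup {y : ℝ | ∃ f : Set X → ℝ, sEntFeasible S f ∧ y = f Set.univ}

/-- The optimum of the covering linear program: minimize `∑ i, x i` over `x ≥ 0` such that
`∑_{i ∈ B} x i ≥ 1` for every nonempty open set `B`. -/
noncomputable def sLPcover {X : Type} [Fintype X] (S : SpanoidOn X) : ℝ :=
  sInf {y : ℝ | ∃ x : X → ℝ, (∀ i, 0 ≤ x i) ∧
    (∀ B : Set X, B.Nonempty → sOpen S B → 1 ≤ ∑ i, B.indicator x i) ∧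
    y = ∑ i, x i}

/-- A spanoid on `[n]` is a `q`-LCS with error-tolerance `δ` if every `i` is spanned by at
least `δ n` pairwise disjoint `q`-element subsets. -/
def sIsLCS {n : ℕ} (q : ℕ) (δ : ℝ) (S : SpanoidOn (Fin n)) : Prop :=
  ∀ i : Fin n, ∃ M : Finset (Finset (Fin n)),
    δ * n ≤ (M.card : ℝ) ∧
    (∀ A ∈ M, A.card = q) ∧
    ((M : Set (Finset (Fin n))).Pairwise fun A B => Disjoint A B) ∧
    ∀ A ∈ M, ((A : Set (Fin n)), i) ∈ S

/-!
Rank is multiplicative under semi-direct products: a set `T ⊆ I × X` spans `P ⋉ S` only if the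
fibres of `T` that span `S` sit over a set spanning `P`. The optimum of the entropy linear program
is submultiplicative: by feasibility on a fibre, a single fibre has entropy at most the optimum
for `S`, so the entropy of unions of fibres is, up to that factor, feasible for `P`. Codewords drawn
uniformly from a consistent code yield a feasible entropy, so this optimum bounds the functional
rank. The pentagon has rank `3`, its vertex cover number, but entropy optimum at most `5 / 2`, and
this gap is amplified by taking powers.
-/

section Span

variable {X : Type} {S : SpanoidOn X} {T U : Set X}

theorem subset_sSpan (S : SpanoidOn X) (T : Set X) : T ⊆ sSpan S T :=
  fun _ hx _ hT => hT.1 hx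

theorem sSpan_subset (hT : T ⊆ U) (hU : ∀ p ∈ S, p.1 ⊆ U → p.2 ∈ U) : sSpan S T ⊆ U :=
  fun _ hx => hx U ⟨hT, hU⟩

theorem mem_sSpan_of_rule {p : Set X × X} (hp : p ∈ S) (h : p.1 ⊆ sSpan S T) :
    p.2 ∈ sSpan S T :=
  fun U hU => hU.2 p hp fun _ hx => h hx U hU

theorem sSpan_subset_sSpan (h : T ⊆ sSpan S U) : sSpan S T ⊆ sSpan S U :=
  sSpan_subset h fun _ => mem_sSpan_of_rule

theorem sSpan_empty_spanoid (T : Set X) : sSpan (∅ : SpanoidOn X) T = T :=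
  (sSpan_subset subset_rfl (by simp)).antisymm (subset_sSpan _ T)

end Span

section Rank

variable {X : Type} [Fintype X] {S : SpanoidOn X}

theorem sRank_le_ncard {T : Set X} (hT : sSpan S T = Set.univ) : sRank S ≤ T.ncard :=
  Nat.sInf_le ⟨T, rfl, hT⟩

theorem exists_ncard_eq_sRank (S : SpanoidOn X) :
    ∃ T : Set X, T.ncard = sRank S ∧ sSpan S T = Set.univ :=
  Nat.sInf_mem (s := {k | ∃ T : Set X, T.ncard = k ∧ sSpan S T = Set.univ})
    ⟨_, Set.univ, rfl, Set.eq_univ_of_univ_subset (subset_sSpan S _)⟩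

theorem sRank_empty_spanoid : sRank (∅ : SpanoidOn X) = Fintype.card X := by
  obtain ⟨T, hcard, hT⟩ := exists_ncard_eq_sRank (∅ : SpanoidOn X)
  rw [← hcard, ← sSpan_empty_spanoid T, hT, Set.ncard_univ, Nat.card_eq_fintype_card]

end Rank

section EntropyProgram

variable {X : Type} {S : SpanoidOn X} {f : Set X → ℝ}

namespace sEntFeasible

theorem nonneg (hf : sEntFeasible S f) (A : Set X) : 0 ≤ f A := by
  obtain ⟨hempty, -, -, hmono, -⟩ := hf
  exact hempty ▸ hmono ∅ A A.empty_subset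

theorem insert_le (hf : sEntFeasible S f) (i : X) (A : Set X) : f (insert i A) ≤ f A + 1 := by
  have hinter := hf.nonneg ({i} ∩ A)
  obtain ⟨-, hsingle, hsubmod, -, -⟩ := hf
  have hunion := hsubmod {i} A
  rw [← Set.insert_eq] at hunion
  linarith [hsingle i]

theorem insert_eq (hf : sEntFeasible S f) {i : X} {A : Set X} (hi : i ∈ sSpan S A) :
    f (insert i A) = f A := by
  obtain ⟨-, -, -, -, hspan⟩ := hf
  rw [← Set.union_singleton, hspan A i hi]

theorem le_ncard [Finite X] (hf : sEntFeasible S f) (A : Set X) : f A ≤ A.ncard := by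
  induction A, A.toFinite using Set.Finite.induction_on with
  | empty => simp [hf.1]
  | @insert i A hi _ ih =>
    rw [Set.ncard_insert_of_notMem hi]
    push_cast
    linarith [hf.insert_le i A]

theorem union_eq [Finite X] (hf : sEntFeasible S f) {A B : Set X} (hB : B ⊆ sSpan S A) :
    f (A ∪ B) = f A := by
  induction B, B.toFinite using Set.Finite.induction_on with
  | empty => rw [Set.union_empty]
  | @insert i B _ _ ih =>
    obtain ⟨hi, hB⟩ := Set.insert_subset_iff.1 hB
    have hspan : sSpan S A ⊆ sSpan S (A ∪ B) :=
      sSpan_subset_sSpan (Set.subset_union_left.trans (subset_sSpan S _))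
    rw [Set.union_insert, hf.insert_eq (hspan hi), ih hB]

theorem univ_le_sLPentropy [Finite X] (hf : sEntFeasible S f) : f Set.univ ≤ sLPentropy S := by
  refine le_csSup ⟨(Set.univ : Set X).ncard, ?_⟩ ⟨f, hf, rfl⟩
  rintro _ ⟨g, hg, rfl⟩
  exact hg.le_ncard Set.univ

end sEntFeasible

theorem sLPentropy_nonneg (S : SpanoidOn X) : 0 ≤ sLPentropy S := by
  refine Real.sSup_nonneg ?_
  rintro _ ⟨f, hf, rfl⟩
  exact hf.nonneg Set.univ

theorem sLPentropy_le {b : ℝ} (hb : 0 ≤ b) (h : ∀ f, sEntFeasible S f → f Set.univ ≤ b) :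
    sLPentropy S ≤ b := by
  refine Real.sSup_le ?_ hb
  rintro _ ⟨f, hf, rfl⟩
  exact h f hf

theorem sLPentropy_le_card [Finite X] (S : SpanoidOn X) : sLPentropy S ≤ Nat.card X :=
  sLPentropy_le (Nat.cast_nonneg _) fun _ hf => Set.ncard_univ X ▸ hf.le_ncard Set.univ

end EntropyProgram

/-- A morphism of spanoids: a map of ground sets carrying every rule of `S` to a rule of `S'`. It
transfers spans forwards and feasible entropies backwards. -/
def sHom {X Y : Type} (φ : X → Y) (S : SpanoidOn X) (S' : SpanoidOn Y) : Prop :=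
  ∀ p ∈ S, (φ '' p.1, φ p.2) ∈ S'

namespace sHom

variable {X Y : Type} {φ : X → Y} {S : SpanoidOn X} {S' : SpanoidOn Y}

theorem image_sSpan_subset (hφ : sHom φ S S') (T : Set X) :
    φ '' sSpan S T ⊆ sSpan S' (φ '' T) :=
  Set.image_subset_iff.2 <| sSpan_subset (Set.image_subset_iff.1 (subset_sSpan S' _))
    fun p hp hsub => mem_sSpan_of_rule (hφ p hp) (Set.image_subset_iff.2 hsub)

theorem sRank_le [Fintype X] [Fintype Y] (hφ : sHom φ S S') (hsurj : φ.Surjective) :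
    sRank S' ≤ sRank S := by
  obtain ⟨T, hcard, hT⟩ := exists_ncard_eq_sRank S
  have hspan : sSpan S' (φ '' T) = Set.univ := by
    rw [← Set.univ_subset_iff, ← Set.image_univ_of_surjective hsurj, ← hT]
    exact hφ.image_sSpan_subset T
  exact (sRank_le_ncard hspan).trans (hcard ▸ Set.ncard_image_le)

theorem sEntFeasible_comp (hφ : sHom φ S S') (hinj : φ.Injective) {f : Set Y → ℝ}
    (hf : sEntFeasible S' f) : sEntFeasible S fun A => f (φ '' A) := by
  obtain ⟨hempty, hsingle, hsubmod, hmono, hspan⟩ := hf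
  refine ⟨(congrArg f (Set.image_empty φ)).trans hempty, fun i => ?_, fun A B => ?_,
    fun A B hAB => hmono _ _ (Set.image_mono hAB), fun A i hi => ?_⟩
  · beta_reduce
    rw [Set.image_singleton]
    exact hsingle (φ i)
  · beta_reduce
    rw [Set.image_union, Set.image_inter hinj]
    exact hsubmod _ _
  · beta_reduce
    rw [Set.image_union, Set.image_singleton]
    exact hspan _ _ (hφ.image_sSpan_subset A (Set.mem_image_of_mem φ hi))

theorem sLPentropy_le [Finite X] (hφ : sHom φ S S') (hbij : φ.Bijective) :
    sLPentropy S' ≤ sLPentropy S :=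
  _root_.sLPentropy_le (sLPentropy_nonneg S) fun f hf => by
    rw [← Set.image_univ_of_surjective hbij.surjective]
    exact (hφ.sEntFeasible_comp hbij.injective hf).univ_le_sLPentropy

end sHom

section Transport

variable {X Y : Type} (e : X ≃ Y) (S : SpanoidOn X)

/-- The spanoid obtained by renaming the elements of the ground set along `e`. -/
def sTransport : SpanoidOn Y :=
  (fun p => (e '' p.1, e p.2)) '' S

theorem sHom_sTransport : sHom e S (sTransport e S) :=
  fun _ hp => Set.mem_image_of_mem _ hp

theorem sHom_sTransport_symm : sHom e.symm (sTransport e S) S := by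
  rintro _ ⟨p, hp, rfl⟩
  simpa only [Equiv.symm_image_image, Equiv.symm_apply_apply] using hp

theorem sRank_sTransport [Fintype X] [Fintype Y] : sRank (sTransport e S) = sRank S :=
  ((sHom_sTransport e S).sRank_le e.surjective).antisymm
    ((sHom_sTransport_symm e S).sRank_le e.symm.surjective)

theorem sLPentropy_sTransport_le [Finite X] : sLPentropy (sTransport e S) ≤ sLPentropy S :=
  (sHom_sTransport e S).sLPentropy_le e.bijective

end Transport

section Semidirect

variable {I X : Type} (P : SpanoidOn I) (S : SpanoidOn X)

/-- The semi-direct product of `P` and `S`: a copy of `S` on each fibre `{a} × X`, and for each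
rule of `P` the rules by which the full fibres over its premises span every element of the fibre
over its conclusion. -/
def sSemidirect : SpanoidOn (I × X) :=
  {q | (∃ a, ∃ p ∈ S, q = (Prod.mk a '' p.1, (a, p.2))) ∨
    ∃ p ∈ P, ∃ x, q = (Prod.fst ⁻¹' p.1, (p.2, x))}

theorem sHom_sSemidirect_mk (a : I) : sHom (Prod.mk a) S (sSemidirect P S) :=
  fun p hp => .inl ⟨a, p, hp, rfl⟩

theorem preimage_fst_sSpan_subset (A : Set I) :
    Prod.fst ⁻¹' sSpan P A ⊆ sSpan (sSemidirect P S) (Prod.fst ⁻¹' A) := by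
  have hspan : sSpan P A ⊆ {i | ∀ x, (i, x) ∈ sSpan (sSemidirect P S) (Prod.fst ⁻¹' A)} :=
    sSpan_subset (fun i hi x => subset_sSpan _ _ (show (i, x).1 ∈ A from hi)) fun p hp hsub x =>
      mem_sSpan_of_rule (p := (Prod.fst ⁻¹' p.1, (p.2, x))) (.inr ⟨p, hp, x, rfl⟩)
        fun y hy => hsub hy y.2
  exact fun y hy => hspan hy y.2

variable {P S}

theorem sSpan_sSemidirect_prod_eq_univ {A : Set I} {B : Set X} (hA : sSpan P A = Set.univ)
    (hB : sSpan S B = Set.univ) : sSpan (sSemidirect P S) (A ×ˢ B) = Set.univ := by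
  have hfiber : Prod.fst ⁻¹' A ⊆ sSpan (sSemidirect P S) (A ×ˢ B) := by
    rintro ⟨a, x⟩ ha
    have hx : (a, x) ∈ sSpan (sSemidirect P S) (Prod.mk a '' B) :=
      (sHom_sSemidirect_mk P S a).image_sSpan_subset B ⟨x, hB ▸ Set.mem_univ x, rfl⟩
    refine sSpan_subset_sSpan ?_ hx
    rintro _ ⟨b, hb, rfl⟩
    exact subset_sSpan _ _ ⟨ha, hb⟩
  rw [← Set.univ_subset_iff, ← Set.preimage_univ (f := Prod.fst), ← hA]
  exact (preimage_fst_sSpan_subset P S A).trans (sSpan_subset_sSpan hfiber)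

theorem sSpan_spanning_fibers_eq_univ {T : Set (I × X)}
    (hT : sSpan (sSemidirect P S) T = Set.univ) :
    sSpan P {a | sSpan S (Prod.mk a ⁻¹' T) = Set.univ} = Set.univ := by
  set F : Set I := {a | sSpan S (Prod.mk a ⁻¹' T) = Set.univ}
  let U : Set (I × X) := {y | y.1 ∈ sSpan P F ∨ y.2 ∈ sSpan S (Prod.mk y.1 ⁻¹' T)}
  have mem_of_fiber_subset {a : I} (ha : ∀ x, (a, x) ∈ U) : a ∈ sSpan P F := by
    by_contra hna
    exact hna (subset_sSpan P F (Set.eq_univ_of_forall fun x => (ha x).resolve_left hna))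
  have span_subset : sSpan (sSemidirect P S) T ⊆ U := by
    refine sSpan_subset (fun y hy => .inr (subset_sSpan S _ hy)) ?_
    rintro _ (⟨a, p, hp, rfl⟩ | ⟨p, hp, x, rfl⟩) hsub
    · refine or_iff_not_imp_left.2 fun ha => mem_sSpan_of_rule hp fun x hx => ?_
      exact (hsub (Set.mem_image_of_mem _ hx)).resolve_left ha
    · exact .inl (mem_sSpan_of_rule hp fun a ha => mem_of_fiber_subset fun x => hsub (by exact ha))
  exact Set.eq_univ_of_forall fun a =>
    mem_of_fiber_subset fun x => span_subset (hT ▸ Set.mem_univ (a, x))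

theorem sum_ncard_fiber [Fintype I] [Finite X] (T : Set (I × X)) :
    ∑ a, (Prod.mk a ⁻¹' T).ncard = T.ncard := by
  have e : T ≃ Σ a, ↥(Prod.mk a ⁻¹' T) :=
    { toFun := fun y => ⟨y.1.1, y.1.2, y.2⟩
      invFun := fun z => ⟨(z.1, z.2.1), z.2.2⟩ }
  simp only [← Nat.card_coe_set_eq, Nat.card_congr e, Nat.card_sigma]

theorem sRank_sSemidirect [Fintype I] [Fintype X] (P : SpanoidOn I) (S : SpanoidOn X) :
    sRank (sSemidirect P S) = sRank P * sRank S := by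
  classical
  apply le_antisymm
  · obtain ⟨A, hAcard, hA⟩ := exists_ncard_eq_sRank P
    obtain ⟨B, hBcard, hB⟩ := exists_ncard_eq_sRank S
    rw [← hAcard, ← hBcard, ← Set.ncard_prod]
    exact sRank_le_ncard (sSpan_sSemidirect_prod_eq_univ hA hB)
  · obtain ⟨T, hcard, hT⟩ := exists_ncard_eq_sRank (sSemidirect P S)
    set F : Set I := {a | sSpan S (Prod.mk a ⁻¹' T) = Set.univ}
    calc sRank P * sRank S ≤ F.ncard * sRank S :=
          Nat.mul_le_mul_right _ (sRank_le_ncard (sSpan_spanning_fibers_eq_univ hT))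
      _ = ∑ _a ∈ F.toFinset, sRank S := by
          rw [Finset.sum_const, smul_eq_mul, Set.ncard_eq_toFinset_card']
      _ ≤ ∑ a ∈ F.toFinset, (Prod.mk a ⁻¹' T).ncard :=
          Finset.sum_le_sum fun a ha => sRank_le_ncard ((Set.mem_toFinset (s := F)).1 ha)
      _ ≤ ∑ a, (Prod.mk a ⁻¹' T).ncard :=
          Finset.sum_le_sum_of_subset (Finset.subset_univ _)
      _ = sRank (sSemidirect P S) := by rw [sum_ncard_fiber, hcard]

theorem sEntFeasible.preimage_fst_div [Finite I] [Finite X] {f : Set (I × X) → ℝ}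
    (hf : sEntFeasible (sSemidirect P S) f) {L : ℝ} (hL : 0 < L)
    (hfiber : ∀ a, f (Prod.fst ⁻¹' {a}) ≤ L) :
    sEntFeasible P fun A => f (Prod.fst ⁻¹' A) / L := by
  refine ⟨?_, fun a => (div_le_one hL).2 (hfiber a), fun A B => ?_, fun A B hAB => ?_,
    fun A i hi => ?_⟩
  · beta_reduce
    rw [Set.preimage_empty, hf.1, zero_div]
  · rw [← add_div, ← add_div]
    exact div_le_div_of_nonneg_right (hf.2.2.1 _ _) hL.le
  · exact div_le_div_of_nonneg_right (hf.2.2.2.1 _ _ (Set.preimage_mono hAB)) hL.le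
  · have hspan : Prod.fst ⁻¹' {i} ⊆ sSpan (sSemidirect P S) (Prod.fst ⁻¹' A) :=
      (Set.preimage_mono (Set.singleton_subset_iff.2 hi)).trans (preimage_fst_sSpan_subset P S A)
    beta_reduce
    rw [Set.preimage_union, hf.union_eq hspan]

theorem sLPentropy_sSemidirect_le [Finite I] [Finite X] (P : SpanoidOn I) (S : SpanoidOn X) :
    sLPentropy (sSemidirect P S) ≤ sLPentropy P * sLPentropy S := by
  refine sLPentropy_le (mul_nonneg (sLPentropy_nonneg P) (sLPentropy_nonneg S)) fun f hf => ?_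
  have hfiber (a : I) : f (Prod.fst ⁻¹' {a}) ≤ sLPentropy S := by
    have hfeas := (sHom_sSemidirect_mk P S a).sEntFeasible_comp (Prod.mk_right_injective a) hf
    convert hfeas.univ_le_sLPentropy using 2
    ext ⟨b, x⟩
    simp [eq_comm]
  -- `sLPentropy S` may vanish, so the entropy is rescaled by each larger factor instead.
  refine le_mul_of_forall_lt₀ fun b hb L hL => ?_
  have hLpos : 0 < L := (sLPentropy_nonneg S).trans_lt hL
  have hdiv := (hf.preimage_fst_div hLpos fun a => (hfiber a).trans hL.le).univ_le_sLPentropy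
  rw [Set.preimage_univ, div_le_iff₀ hLpos] at hdiv
  exact hdiv.trans (mul_le_mul_of_nonneg_right hb.le hLpos.le)

end Semidirect

section Power

variable {n : ℕ} (P : SpanoidOn (Fin n))

/-- The `k`-fold iterated semi-direct product of `P` with itself, its ground set being identified
with `Fin (n ^ k)`. The zeroth power is the one-element spanoid without rules. -/
def sPow : (k : ℕ) → SpanoidOn (Fin (n ^ k))
  | 0 => ∅
  | k + 1 => sTransport (finProdFinEquiv (m := n ^ k) (n := n)) (sSemidirect (sPow k) P)

theorem sRank_sPow (k : ℕ) : sRank (sPow P k) = sRank P ^ k := by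
  induction k with
  | zero => exact sRank_empty_spanoid.trans (Fintype.card_fin _)
  | succ k ih =>
    calc sRank (sPow P (k + 1)) = sRank (sSemidirect (sPow P k) P) := sRank_sTransport _ _
      _ = sRank (sPow P k) * sRank P := sRank_sSemidirect _ _
      _ = sRank P ^ (k + 1) := by rw [ih, pow_succ]

theorem sLPentropy_sPow_le (k : ℕ) : sLPentropy (sPow P k) ≤ sLPentropy P ^ k := by
  induction k with
  | zero => simpa using sLPentropy_le_card (sPow P 0)
  | succ k ih =>
    calc sLPentropy (sPow P (k + 1)) ≤ sLPentropy (sSemidirect (sPow P k) P) :=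
          sLPentropy_sTransport_le _ _
      _ ≤ sLPentropy (sPow P k) * sLPentropy P := sLPentropy_sSemidirect_le _ _
      _ ≤ sLPentropy P ^ k * sLPentropy P :=
          mul_le_mul_of_nonneg_right ih (sLPentropy_nonneg P)
      _ = sLPentropy P ^ (k + 1) := (pow_succ _ _).symm

end Power

section PartitionEntropy

variable {Ω : Type*} [Fintype Ω] {r s t : Setoid Ω}

theorem expect_log_le_log_expect [Nonempty Ω] {x : Ω → ℝ} (hx : ∀ ω, 0 < x ω) :
    𝔼 ω, Real.log (x ω) ≤ Real.log (𝔼 ω, x ω) := by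
  have hcard : (0 : ℝ) < Fintype.card Ω := by exact_mod_cast Fintype.card_pos
  have hjensen := strictConcaveOn_log_Ioi.concaveOn.le_map_sum (t := Finset.univ)
    (w := fun _ : Ω => (Fintype.card Ω : ℝ)⁻¹) (p := x) (fun _ _ => by positivity)
    (by simp [hcard.ne']) fun ω _ => hx ω
  simpa only [Fintype.expect_eq_sum_div_card, Finset.sum_div, smul_eq_mul, inv_mul_eq_div]
    using hjensen

open scoped Classical in
/-- The equivalence class of `ω` under `r`, as a finite set, so that it can be counted and summed
over. -/
noncomputable def eqvClass (r : Setoid Ω) (ω : Ω) : Finset Ω :=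
  {ω' | r ω' ω}

theorem mem_eqvClass {a b : Ω} : a ∈ eqvClass r b ↔ r a b := by
  simp [eqvClass]

theorem mem_eqvClass_comm {a b : Ω} : a ∈ eqvClass r b ↔ b ∈ eqvClass r a := by
  simp only [mem_eqvClass, Setoid.comm']

theorem card_eqvClass_pos (r : Setoid Ω) (ω : Ω) : (0 : ℝ) < (eqvClass r ω).card := by
  exact_mod_cast Finset.card_pos.2 ⟨ω, mem_eqvClass.2 (r.refl' ω)⟩

theorem eqvClass_mono (h : r ≤ s) (ω : Ω) : eqvClass r ω ⊆ eqvClass s ω :=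
  fun _ hω => mem_eqvClass.2 (h (mem_eqvClass.1 hω))

theorem eqvClass_congr {a b : Ω} (h : r a b) : eqvClass r a = eqvClass r b := by
  ext ω
  simp only [mem_eqvClass]
  exact ⟨fun hω => r.trans' hω h, fun hω => r.trans' hω (r.symm' h)⟩

theorem sum_inv_card_eqvClass_le_one {F : Finset Ω} (hF : ∀ a ∈ F, ∀ b ∈ F, r a b) :
    ∑ a ∈ F, ((eqvClass r a).card : ℝ)⁻¹ ≤ 1 := by
  rcases F.eq_empty_or_nonempty with rfl | hne
  · simp
  have hcard : (0 : ℝ) < F.card := by exact_mod_cast hne.card_pos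
  calc ∑ a ∈ F, ((eqvClass r a).card : ℝ)⁻¹ ≤ ∑ _a ∈ F, (F.card : ℝ)⁻¹ := by
        gcongr with a ha
        exact fun b hb => mem_eqvClass.2 (hF b hb a ha)
    _ = 1 := by rw [Finset.sum_const, nsmul_eq_mul, mul_inv_cancel₀ hcard.ne']

/-- The Shannon entropy of the `r`-class of a uniformly distributed element of `Ω`. -/
noncomputable def partitionEntropy (r : Setoid Ω) : ℝ :=
  𝔼 ω, Real.log (Fintype.card Ω / (eqvClass r ω).card)

theorem partitionEntropy_eq_expect_sub (r : Setoid Ω) :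
    partitionEntropy r =
      𝔼 ω, (Real.log (Fintype.card Ω) - Real.log (eqvClass r ω).card) := by
  refine Finset.expect_congr rfl fun ω _ => ?_
  have : Nonempty Ω := ⟨ω⟩
  rw [Real.log_div (by simp) (card_eqvClass_pos r ω).ne']

theorem partitionEntropy_top : partitionEntropy (⊤ : Setoid Ω) = 0 := by
  have hclass (ω : Ω) : eqvClass ⊤ ω = Finset.univ := by ext; simp [mem_eqvClass]
  refine Finset.expect_eq_zero fun ω _ => ?_
  rw [hclass, Finset.card_univ]
  rcases eq_or_ne (Fintype.card Ω : ℝ) 0 with h | h <;> simp [h]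

theorem partitionEntropy_bot [Nonempty Ω] :
    partitionEntropy (⊥ : Setoid Ω) = Real.log (Fintype.card Ω) := by
  have hclass (ω : Ω) : eqvClass ⊥ ω = {ω} := by ext; simp [mem_eqvClass]
  simp [partitionEntropy, hclass]

theorem partitionEntropy_anti (h : r ≤ s) : partitionEntropy s ≤ partitionEntropy r := by
  refine Finset.expect_le_expect fun ω _ => ?_
  have : Nonempty Ω := ⟨ω⟩
  have := card_eqvClass_pos r ω
  have := card_eqvClass_pos s ω
  gcongr
  exact eqvClass_mono h ω

theorem partitionEntropy_le_log_card {K : Type*} [Fintype K] {φ : Ω → K}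
    (hφ : Setoid.ker φ ≤ r) : partitionEntropy r ≤ Real.log (Fintype.card K) := by
  classical
  rcases isEmpty_or_nonempty Ω with hΩ | hΩ
  · simpa [partitionEntropy] using Real.log_natCast_nonneg _
  have hpos (ω : Ω) : (0 : ℝ) < Fintype.card Ω / (eqvClass r ω).card :=
    div_pos (by exact_mod_cast Fintype.card_pos) (card_eqvClass_pos r ω)
  refine (expect_log_le_log_expect hpos).trans
    (Real.log_le_log (Finset.expect_pos (fun ω _ => hpos ω) Finset.univ_nonempty) ?_)
  calc 𝔼 ω, (Fintype.card Ω : ℝ) / (eqvClass r ω).card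
      = ∑ ω, ((eqvClass r ω).card : ℝ)⁻¹ := by
        simp only [div_eq_mul_inv, ← Finset.mul_expect, Fintype.card_mul_expect]
    _ = ∑ v, ∑ ω with φ ω = v, ((eqvClass r ω).card : ℝ)⁻¹ :=
        (Finset.sum_fiberwise _ _ _).symm
    _ ≤ ∑ _v : K, 1 := by
        refine Finset.sum_le_sum fun v _ => sum_inv_card_eqvClass_le_one fun a ha b hb => hφ ?_
        exact (Finset.mem_filter.1 ha).2.trans (Finset.mem_filter.1 hb).2.symm
    _ = Fintype.card K := by simp

theorem sum_card_eqvClass_ratio_le_card (hr : r ≤ t) (hs : s ≤ t) :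
    ∑ ω, ((eqvClass r ω).card * (eqvClass s ω).card : ℝ) /
      ((eqvClass (r ⊓ s) ω).card * (eqvClass t ω).card) ≤ Fintype.card Ω := by
  classical
  calc
    _ = ∑ ω, ∑ _a ∈ eqvClass r ω, ∑ _b ∈ eqvClass s ω,
          ((eqvClass (r ⊓ s) ω).card : ℝ)⁻¹ * ((eqvClass t ω).card : ℝ)⁻¹ := by
        simp only [Finset.sum_const, nsmul_eq_mul, div_eq_mul_inv, mul_inv, mul_assoc]
    _ = ∑ a, ∑ ω ∈ eqvClass r a, ∑ _b ∈ eqvClass s ω,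
          ((eqvClass (r ⊓ s) ω).card : ℝ)⁻¹ * ((eqvClass t ω).card : ℝ)⁻¹ :=
        Finset.sum_comm' fun ω a => by simp [mem_eqvClass_comm (a := a)]
    _ = ∑ a, ∑ b ∈ eqvClass t a, ∑ ω ∈ eqvClass r a ∩ eqvClass s b,
          ((eqvClass (r ⊓ s) ω).card : ℝ)⁻¹ * ((eqvClass t ω).card : ℝ)⁻¹ := by
        refine Finset.sum_congr rfl fun a _ => Finset.sum_comm' fun ω b => ?_
        simp only [Finset.mem_inter, mem_eqvClass]
        exact ⟨fun ⟨hωa, hbω⟩ => ⟨⟨hωa, s.symm' hbω⟩, t.trans' (hs hbω) (hr hωa)⟩,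
          fun ⟨⟨hωa, hωb⟩, _⟩ => ⟨hωa, s.symm' hωb⟩⟩
    _ = ∑ a, ∑ b ∈ eqvClass t a, (∑ ω ∈ eqvClass r a ∩ eqvClass s b,
          ((eqvClass (r ⊓ s) ω).card : ℝ)⁻¹) * ((eqvClass t a).card : ℝ)⁻¹ := by
        refine Finset.sum_congr rfl fun a _ => Finset.sum_congr rfl fun b _ => ?_
        rw [Finset.sum_mul]
        refine Finset.sum_congr rfl fun ω hω => ?_
        rw [eqvClass_congr (hr (mem_eqvClass.1 (Finset.mem_inter.1 hω).1))]
    _ ≤ ∑ a, ∑ _b ∈ eqvClass t a, 1 * ((eqvClass t a).card : ℝ)⁻¹ := by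
        gcongr with a _ b _
        refine sum_inv_card_eqvClass_le_one fun ω hω ω' hω' => ?_
        simp only [Finset.mem_inter, mem_eqvClass] at hω hω'
        exact ⟨r.trans' hω.1 (r.symm' hω'.1), s.trans' hω.2 (s.symm' hω'.2)⟩
    _ = Fintype.card Ω := by
        simp [(card_eqvClass_pos t _).ne']

theorem partitionEntropy_submodular (hr : r ≤ t) (hs : s ≤ t) :
    partitionEntropy (r ⊓ s) + partitionEntropy t ≤ partitionEntropy r + partitionEntropy s := by
  rcases isEmpty_or_nonempty Ω with hΩ | hΩ
  · simp [partitionEntropy]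
  let ratio (ω : Ω) : ℝ := ((eqvClass r ω).card * (eqvClass s ω).card : ℝ) /
    ((eqvClass (r ⊓ s) ω).card * (eqvClass t ω).card)
  have pos := card_eqvClass_pos (Ω := Ω)
  have hratio (ω : Ω) : 0 < ratio ω :=
    div_pos (mul_pos (pos r ω) (pos s ω)) (mul_pos (pos (r ⊓ s) ω) (pos t ω))
  have hmean : 𝔼 ω, ratio ω ≤ 1 := by
    rw [Fintype.expect_eq_sum_div_card]
    exact div_le_one_of_le₀ (sum_card_eqvClass_ratio_le_card hr hs) (Nat.cast_nonneg _)
  have hlog : 𝔼 ω, Real.log (ratio ω) ≤ 0 :=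
    (expect_log_le_log_expect hratio).trans
      (Real.log_nonpos (Finset.expect_nonneg fun ω _ => (hratio ω).le) hmean)
  have hsplit (ω : Ω) : Real.log (ratio ω) =
      Real.log (eqvClass r ω).card + Real.log (eqvClass s ω).card -
        (Real.log (eqvClass (r ⊓ s) ω).card + Real.log (eqvClass t ω).card) := by
    rw [Real.log_div (mul_pos (pos r ω) (pos s ω)).ne' (mul_pos (pos (r ⊓ s) ω) (pos t ω)).ne',
      Real.log_mul (pos r ω).ne' (pos s ω).ne', Real.log_mul (pos _ ω).ne' (pos t ω).ne']
  simp only [hsplit, Finset.expect_sub_distrib, Finset.expect_add_distrib] at hlog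
  simp only [partitionEntropy_eq_expect_sub, Finset.expect_sub_distrib]
  linarith

end PartitionEntropy

section CodeEntropy

variable {X K : Type} {S : SpanoidOn X} {C : Set (X → K)} {A B : Set X}

/-- The equivalence relation on the codewords of `C` of having equal restrictions to `A`. Its
partition entropy is the entropy of `c|_A` for a uniformly random codeword `c`. -/
def agreeOn (C : Set (X → K)) (A : Set X) : Setoid C where
  r c d := Set.EqOn c.1 d.1 A
  iseqv := ⟨fun _ => Set.eqOn_refl _ _, fun h => h.symm, fun h h' => h.trans h'⟩

theorem agreeOn_empty : agreeOn C ∅ = ⊤ :=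
  Setoid.ext fun _ _ => iff_of_true (Set.eqOn_empty _ _) trivial

theorem agreeOn_univ : agreeOn C Set.univ = ⊥ :=
  Setoid.ext fun _ _ => Set.eqOn_univ _ _ |>.trans Subtype.ext_iff.symm

theorem agreeOn_anti (h : A ⊆ B) : agreeOn C B ≤ agreeOn C A :=
  fun _ _ hB => hB.mono h

theorem agreeOn_union : agreeOn C (A ∪ B) = agreeOn C A ⊓ agreeOn C B :=
  Setoid.ext fun _ _ => Set.eqOn_union

theorem sConsistent.agreeOn_le_agreeOn_sSpan (hC : sConsistent S C) (A : Set X) :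
    agreeOn C A ≤ agreeOn C (sSpan S A) := by
  intro c d hcd
  refine sSpan_subset (U := {x | c.1 x = d.1 x}) hcd fun p hp hsub => ?_
  obtain ⟨g, hg⟩ := hC p hp
  change c.1 p.2 = d.1 p.2
  rw [hg c.1 c.2, hg d.1 d.2]
  exact congrArg g (funext fun a => hsub a.2)

theorem sConsistent.agreeOn_union_eq (hC : sConsistent S C) (hB : B ⊆ sSpan S A) :
    agreeOn C (A ∪ B) = agreeOn C A := by
  rw [agreeOn_union, inf_eq_left]
  exact (hC.agreeOn_le_agreeOn_sSpan A).trans (agreeOn_anti hB)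

theorem sConsistent.sEntFeasible_partitionEntropy [Fintype C] [Fintype K] [Nontrivial K]
    (hC : sConsistent S C) :
    sEntFeasible S fun A => partitionEntropy (agreeOn C A) / Real.log (Fintype.card K) := by
  have hlog : 0 < Real.log (Fintype.card K) :=
    Real.log_pos (by exact_mod_cast Fintype.one_lt_card)
  refine ⟨?_, fun i => ?_, fun A B => ?_, fun A B hAB => ?_, fun A i hi => ?_⟩
  · beta_reduce
    rw [agreeOn_empty, partitionEntropy_top, zero_div]
  · rw [div_le_one hlog]
    refine partitionEntropy_le_log_card (φ := fun c : C => c.1 i) fun c d hcd => ?_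
    exact Set.eqOn_singleton.2 hcd
  · rw [← add_div, ← add_div, agreeOn_union]
    exact div_le_div_of_nonneg_right (partitionEntropy_submodular
      (agreeOn_anti Set.inter_subset_left) (agreeOn_anti Set.inter_subset_right)) hlog.le
  · exact div_le_div_of_nonneg_right (partitionEntropy_anti (agreeOn_anti hAB)) hlog.le
  · beta_reduce
    rw [hC.agreeOn_union_eq (Set.singleton_subset_iff.2 hi)]

theorem sFrank_le_sLPentropy [Finite X] (S : SpanoidOn X) : sFrank S ≤ sLPentropy S := by
  refine Real.sSup_le ?_ (sLPentropy_nonneg S)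
  rintro _ ⟨m, hm, C, hC, rfl⟩
  have : Fintype C := Fintype.ofFinite C
  have : Nontrivial (Fin m) := Fin.nontrivial_iff_two_le.2 hm
  rcases isEmpty_or_nonempty C with hempty | hne
  · simpa using sLPentropy_nonneg S
  have hle := hC.sEntFeasible_partitionEntropy.univ_le_sLPentropy
  rwa [agreeOn_univ, partitionEntropy_bot, Fintype.card_fin, ← Nat.card_eq_fintype_card] at hle

end CodeEntropy

section NeighborSpanoid

variable {V : Type} (G : SimpleGraph V)

/-- The spanoid of a graph in which the neighbours of a vertex span that vertex,
so that the spanning sets are the vertex covers. -/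
def neighborSpanoid : SpanoidOn V :=
  Set.range fun v => (G.neighborSet v, v)

variable {G}

theorem mem_sSpan_neighborSpanoid {T : Set V} {v : V} (hv : G.neighborSet v ⊆ T) :
    v ∈ sSpan (neighborSpanoid G) T :=
  mem_sSpan_of_rule (p := (G.neighborSet v, v)) ⟨v, rfl⟩ (hv.trans (subset_sSpan _ T))

theorem sSpan_neighborSpanoid_eq_univ_iff {T : Set V} :
    sSpan (neighborSpanoid G) T = Set.univ ↔ G.IsVertexCover T := by
  constructor
  · intro hT v w hvw
    by_contra! hnot
    -- Each endpoint of an uncovered edge blocks the inference of the other.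
    have hspan : sSpan (neighborSpanoid G) T ⊆ {v, w}ᶜ := by
      refine sSpan_subset ?_ ?_
      · rintro u hu (rfl | rfl)
        exacts [hnot.1 hu, hnot.2 hu]
      · rintro _ ⟨u, rfl⟩ hsub (rfl | rfl)
        exacts [hsub hvw (.inr rfl), hsub hvw.symm (.inl rfl)]
    exact hspan (hT ▸ Set.mem_univ v) (.inl rfl)
  · refine fun hT => Set.eq_univ_of_forall fun v => ?_
    by_cases hv : v ∈ T
    · exact subset_sSpan _ T hv
    · exact mem_sSpan_neighborSpanoid fun w hvw => (hT hvw).resolve_left hv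

theorem le_two_mul_ncard_of_isVertexCover_cycleGraph {n : ℕ} {T : Set (Fin (n + 2))}
    (hT : (SimpleGraph.cycleGraph (n + 2)).IsVertexCover T) : n + 2 ≤ 2 * T.ncard := by
  have hcover : (Set.univ : Set (Fin (n + 2))) ⊆ T ∪ (· - 1) '' T := fun v _ =>
    (hT (SimpleGraph.cycleGraph_adj.2 (.inr (by simp)) :
      (SimpleGraph.cycleGraph (n + 2)).Adj v (v + 1))).imp_right fun hv => ⟨v + 1, hv, by simp⟩
  calc n + 2 = (Set.univ : Set (Fin (n + 2))).ncard := by simp [Set.ncard_univ]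
    _ ≤ (T ∪ (· - 1) '' T).ncard := Set.ncard_le_ncard hcover
    _ ≤ T.ncard + ((· - 1) '' T).ncard := Set.ncard_union_le _ _
    _ ≤ T.ncard + T.ncard := Nat.add_le_add_left Set.ncard_image_le _
    _ = 2 * T.ncard := (two_mul _).symm

end NeighborSpanoid

section Pentagon

/-- The pentagon spanoid `Π₅`: any two vertices of the `5`-cycle at distance two span the vertex
between them. -/
def pentagon : SpanoidOn (Fin 5) :=
  neighborSpanoid (SimpleGraph.cycleGraph 5)

theorem sRank_pentagon : sRank pentagon = 3 := by
  apply le_antisymm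
  · have hcover : (SimpleGraph.cycleGraph 5).IsVertexCover ({0, 1, 3} : Finset (Fin 5)) := by
      simp only [SimpleGraph.IsVertexCover, Finset.mem_coe]
      decide
    have hle := sRank_le_ncard (sSpan_neighborSpanoid_eq_univ_iff.2 hcover)
    rwa [Set.ncard_coe_finset] at hle
  · obtain ⟨T, hcard, hT⟩ := exists_ncard_eq_sRank pentagon
    have hle := le_two_mul_ncard_of_isVertexCover_cycleGraph
      (sSpan_neighborSpanoid_eq_univ_iff.1 hT)
    omega

theorem mem_sSpan_pentagon {A : Set (Fin 5)} {i : Fin 5} (hprev : i - 1 ∈ A)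
    (hnext : i + 1 ∈ A) : i ∈ sSpan pentagon A := by
  refine mem_sSpan_neighborSpanoid ?_
  rw [SimpleGraph.cycleGraph_neighborSet]
  exact Set.pair_subset hprev hnext

theorem sLPentropy_pentagon_le : sLPentropy pentagon ≤ 5 / 2 := by
  refine sLPentropy_le (by norm_num) fun f hf => ?_
  have hpair (i j : Fin 5) : f {i, j} ≤ 2 := by
    have hi := hf.insert_le i {j}
    have hj := hf.2.1 j
    linarith
  have h012 : f {1, 0, 2} ≤ 2 :=
    (hf.insert_eq (mem_sSpan_pentagon (by simp) (by simp))).trans_le (hpair 0 2)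
  have h401 : f {0, 4, 1} ≤ 2 :=
    (hf.insert_eq (mem_sSpan_pentagon (.inl rfl) (by simp))).trans_le (hpair 4 1)
  have hunion : f ({1, 0, 2} ∪ {0, 4, 1}) = f Set.univ := by
    rw [← hf.insert_eq (i := 3) (mem_sSpan_pentagon (by simp) (by simp))]
    congr 1
    ext i
    fin_cases i <;> simp
  have hinter : ({1, 0, 2} ∩ {0, 4, 1} : Set (Fin 5)) = {0, 1} := by
    ext i
    fin_cases i <;> simp
  have hsubmod : f Set.univ + f {0, 1} ≤ 4 := by
    have h := hf.2.2.1 {1, 0, 2} {0, 4, 1}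
    rw [hunion, hinter] at h
    linarith
  have hspan : f Set.univ ≤ f {0, 1} + 1 := by
    have h2 : f {2, 3, 0, 1} = f {3, 0, 1} :=
      hf.insert_eq (mem_sSpan_pentagon (by simp) (by simp))
    have h4 : f {4, 2, 3, 0, 1} = f {2, 3, 0, 1} :=
      hf.insert_eq (mem_sSpan_pentagon (by simp) (by simp))
    have huniv : (Set.univ : Set (Fin 5)) = {4, 2, 3, 0, 1} := by
      ext i
      fin_cases i <;> simp
    rw [huniv, h4, h2]
    exact hf.insert_le 3 {0, 1}
  linarith

end Pentagon

section Exponent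

theorem pow_rpow_logb {b x : ℝ} (hb : 1 < b) (hx : 0 < x) (k : ℕ) :
    (b ^ k) ^ Real.logb b x = x ^ k := by
  have hb0 : 0 < b := one_pos.trans hb
  rw [← Real.rpow_pow_comm hb0.le, Real.rpow_logb hb0 hb.ne' hx]

theorem six_div_fiftyThree_le_logb : (6 / 53 : ℝ) ≤ Real.logb 5 (6 / 5) := by
  have hpow : Real.logb 5 (5 ^ 6) ≤ Real.logb 5 ((6 / 5) ^ 53) :=
    Real.logb_le_logb_of_le (by norm_num) (by norm_num) (by norm_num)
  rw [Real.logb_pow, Real.logb_pow, Real.logb_self_eq_one (by norm_num)] at hpow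
  push_cast at hpow
  linarith

end Exponent

/-- for every `k ≥ 1` there is a spanoid on `n = 5^k` elements with rank `3^k`
and functional rank at most `(5/2)^k`; consequently `rank(S) ≥ n^c · f-rank(S)` with
`c = log₅ 3 − log₅ (5/2) ≥ 0.113`. -/
theorem frank_rank_polynomial_gap :
    ∀ k : ℕ, 1 ≤ k → ∃ S : SpanoidOn (Fin (5 ^ k)),
      sRank S = 3 ^ k ∧ sFrank S ≤ (5 / 2 : ℝ) ^ k ∧
      (0.113 : ℝ) ≤ Real.logb 5 3 - Real.logb 5 (5 / 2) ∧
      ((5 ^ k : ℕ) : ℝ) ^ (Real.logb 5 3 - Real.logb 5 (5 / 2)) * sFrank S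
        ≤ (sRank S : ℝ) := by
  intro k _
  have hexp : Real.logb 5 3 - Real.logb 5 (5 / 2) = Real.logb 5 (6 / 5) := by
    rw [← Real.logb_div (by norm_num) (by norm_num)]
    norm_num
  have hrank : sRank (sPow pentagon k) = 3 ^ k := by rw [sRank_sPow, sRank_pentagon]
  have hfrank : sFrank (sPow pentagon k) ≤ (5 / 2) ^ k :=
    calc sFrank (sPow pentagon k) ≤ sLPentropy (sPow pentagon k) := sFrank_le_sLPentropy _
      _ ≤ sLPentropy pentagon ^ k := sLPentropy_sPow_le pentagon k
      _ ≤ (5 / 2) ^ k := pow_le_pow_left₀ (sLPentropy_nonneg _) sLPentropy_pentagon_le k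
  refine ⟨sPow pentagon k, hrank, hfrank, ?_, ?_⟩
  · rw [hexp]
    exact le_trans (by norm_num) six_div_fiftyThree_le_logb
  · rw [hexp, hrank]
    push_cast
    rw [pow_rpow_logb (by norm_num) (by norm_num)]
    calc (6 / 5 : ℝ) ^ k * sFrank (sPow pentagon k) ≤ (6 / 5) ^ k * (5 / 2) ^ k := by gcongr
      _ = 3 ^ k := by rw [← mul_pow]; norm_num
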